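/- Let A be an N×N Jacobi matrix with spectral data (λ_k, φ_k, ρ_k) as in the context, T > 0, and let F_0^T = { f ∈ C^∞([0,T]) : f(0) = f(T) = f'(0) = f'(T) = 0 }. Then inf { ⟨C^T f'', f⟩_{L²(0,T)} : f ∈ F_0^T, ⟨C^T f, f⟩_{L²(0,T)} = 1 } = −λ_N, where λ_N is the largest eigenvalue of A (i.e. the infimum equals the smallest eigenvalue of −A, the operator governing the system u'' = −Au + F). -/

import Mathlib

open MeasureTheory Real Matrix

/-- `S t λ` solves `S'' = -λ S`, `S 0 = 0`, `S' 0 = 1`. -/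
noncomputable def S (t lam : ℝ) : ℝ :=
  if 0 < lam then Real.sin (Real.sqrt lam * t) / Real.sqrt lam
  else if lam < 0 then Real.sinh (Real.sqrt (-lam) * t) / Real.sqrt (-lam)
  else t

/-- An `N × N` Jacobi matrix: real symmetric tridiagonal with positive off-diagonal entries. -/
def IsJacobi {N : ℕ} (A : Matrix (Fin N) (Fin N) ℝ) : Prop :=
  (∀ i j, A i j = A j i) ∧
  (∀ i j : Fin N, (i : ℕ) + 1 < (j : ℕ) → A i j = 0) ∧
  (∀ i j : Fin N, (i : ℕ) + 1 = (j : ℕ) → 0 < A i j)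


/-- The connecting operator `C^T`. -/
noncomputable def CTop {N : ℕ} (lam ρ : Fin N → ℝ) (T : ℝ) (f : ℝ → ℝ) : ℝ → ℝ :=
  fun t => ∑ k, (1 / ρ k) * S (T - t) (lam k) * ∫ s in (0:ℝ)..T, S (T - s) (lam k) * f s

/-!
Write `a_μ(f) = ∫₀ᵀ S(T - s, μ) f(s) ds`. Then `⟨Cᵀf, f⟩ = ∑ₖ a_{λₖ}(f)² / ρₖ`, and two
integrations by parts give `a_μ(f'') = -μ a_μ(f)` on `F₀ᵀ`, so `⟨Cᵀf'', f⟩ = -∑ₖ λₖ a_{λₖ}(f)² / ρₖ`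
is bounded below by `-λ_N ⟨Cᵀf, f⟩`. Equality holds for a control with `a_{λₖ}(f) = 0` whenever
`λₖ ≠ λ_N`. Such a control comes from a test function `f` on `(0, T)` with `a_{λ_N}(f) ≠ 0`:
replacing `f` by `f'' + ν f` multiplies every `a_μ(f)` by `ν - μ`, so the finitely many unwanted
coefficients can be annihilated one after the other while `a_{λ_N}(f)` stays nonzero.
-/

open Set
open scoped ContDiff Topology

lemma sum_mul_self_pos {ι : Type*} [Fintype ι] {v : ι → ℝ} {i : ι} (hi : v i ≠ 0) :
    0 < ∑ j, v j * v j :=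
  Finset.sum_pos' (fun j _ => mul_self_nonneg (v j)) ⟨i, Finset.mem_univ i, mul_self_pos.2 hi⟩

section FundamentalSolution

/-- The derivative of `S` in time, that is, the solution of `y'' = -lam * y` with `y 0 = 1` and
`y' 0 = 0`. -/
noncomputable def dS (t lam : ℝ) : ℝ :=
  if 0 < lam then Real.cos (√lam * t)
  else if lam < 0 then Real.cosh (√(-lam) * t)
  else 1

lemma hasDerivAt_S (lam t : ℝ) : HasDerivAt (S · lam) (dS t lam) t := by
  unfold S dS
  split_ifs with hpos hneg
  · have hsqrt : √lam ≠ 0 := (Real.sqrt_pos.2 hpos).ne'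
    exact (((hasDerivAt_id t).const_mul √lam).sin.div_const √lam).congr_deriv
      (by simp [hsqrt])
  · have hsqrt : √(-lam) ≠ 0 := (Real.sqrt_pos.2 (neg_pos.2 hneg)).ne'
    exact (((hasDerivAt_id t).const_mul √(-lam)).sinh.div_const √(-lam)).congr_deriv
      (by simp [hsqrt])
  · exact hasDerivAt_id t

lemma hasDerivAt_dS (lam t : ℝ) : HasDerivAt (dS · lam) (-lam * S t lam) t := by
  unfold S dS
  split_ifs with hpos hneg
  · have hsqrt : √lam ≠ 0 := (Real.sqrt_pos.2 hpos).ne'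
    refine ((hasDerivAt_id t).const_mul √lam).cos.congr_deriv ?_
    nth_rw 3 [← Real.mul_self_sqrt hpos.le]
    simp only [id_eq]
    field_simp
  · have hsqrt : √(-lam) ≠ 0 := (Real.sqrt_pos.2 (neg_pos.2 hneg)).ne'
    refine ((hasDerivAt_id t).const_mul √(-lam)).cosh.congr_deriv ?_
    nth_rw 3 [← Real.mul_self_sqrt (neg_pos.2 hneg).le]
    simp only [id_eq]
    field_simp
  · obtain rfl : lam = 0 := le_antisymm (not_lt.1 hpos) (not_lt.1 hneg)
    simpa using hasDerivAt_const t (1 : ℝ)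

lemma dS_zero (lam : ℝ) : dS 0 lam = 1 := by
  simp [dS]

lemma contDiff_S (lam : ℝ) : ContDiff ℝ ∞ (S · lam) := by
  unfold S
  split_ifs <;> fun_prop

lemma continuous_S_sub (T lam : ℝ) : Continuous fun t => S (T - t) lam :=
  (contDiff_S lam).continuous.comp (continuous_const.sub continuous_id)

lemma exists_S_ne_zero {T : ℝ} (hT : 0 < T) (lam : ℝ) : ∃ t ∈ Ioo 0 T, S t lam ≠ 0 := by
  have hne : ∀ᶠ t in 𝓝[>] 0, S t lam ≠ 0 :=
    nhdsGT_le_nhdsNE 0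
      ((hasDerivAt_S lam 0).eventually_ne (by rw [dS_zero]; exact one_ne_zero))
  exact (hne.and (Ioo_mem_nhdsGT hT)).exists.imp fun _ ht => ⟨ht.2, ht.1⟩

end FundamentalSolution

section Controls

/-- The class `F₀ᵀ` of admissible controls: the functions smooth on `[0, T]` that vanish to first
order at both endpoints. Nothing is required of their values outside `[0, T]`. -/
def controls (T : ℝ) : Set (ℝ → ℝ) :=
  {f | ContDiffOn ℝ ∞ f (Icc 0 T) ∧ f 0 = 0 ∧ f T = 0 ∧
    derivWithin f (Icc 0 T) 0 = 0 ∧ derivWithin f (Icc 0 T) T = 0}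

variable {T : ℝ} {f : ℝ → ℝ}

lemma intervalIntegrable_of_mem_controls (hT : 0 ≤ T) (hf : f ∈ controls T) :
    IntervalIntegrable f volume 0 T :=
  hf.1.continuousOn.intervalIntegrable_of_Icc hT

lemma const_mul_mem_controls (c : ℝ) (hf : f ∈ controls T) : (fun t => c * f t) ∈ controls T := by
  obtain ⟨hsmooth, hf0, hfT, hdf0, hdfT⟩ := hf
  exact ⟨contDiffOn_const.mul hsmooth, by simp [hf0], by simp [hfT],
    by simp [derivWithin_const_mul_field, hdf0], by simp [derivWithin_const_mul_field, hdfT]⟩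

lemma mem_controls_of_tsupport_subset (hT : 0 < T) (hf : ContDiff ℝ ∞ f)
    (hsupp : tsupport f ⊆ Ioo 0 T) : f ∈ controls T := by
  have hval : ∀ t ∉ Ioo 0 T, f t = 0 := fun t ht =>
    image_eq_zero_of_notMem_tsupport fun h => ht (hsupp h)
  have hderiv : ∀ t ∈ Icc 0 T, t ∉ Ioo 0 T → derivWithin f (Icc 0 T) t = 0 := fun t ht ht' => by
    rw [(hf.differentiable (by simp) t).derivWithin (uniqueDiffOn_Icc hT t ht)]
    exact deriv_of_notMem_tsupport fun h => ht' (hsupp h)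
  exact ⟨hf.contDiffOn, hval 0 (by simp), hval T (by simp),
    hderiv 0 (left_mem_Icc.2 hT.le) (by simp), hderiv T (right_mem_Icc.2 hT.le) (by simp)⟩

lemma deriv_deriv_eq_derivWithin_derivWithin {s : Set ℝ} {t : ℝ} (hs : s ∈ 𝓝 t) :
    deriv (deriv f) t = derivWithin (derivWithin f s) s t := by
  have hderiv : deriv f =ᶠ[𝓝 t] derivWithin f s := by
    filter_upwards [eventually_mem_nhds_iff.2 hs] with r hr using (derivWithin_of_mem_nhds hr).symm
  rw [hderiv.deriv_eq, derivWithin_of_mem_nhds hs]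

lemma integral_mul_deriv_deriv_of_mem_controls (hT : 0 < T) (hf : f ∈ controls T)
    {u u' u'' : ℝ → ℝ} (hu : ∀ t, HasDerivAt u (u' t) t) (hu' : ∀ t, HasDerivAt u' (u'' t) t)
    (hu'' : Continuous u'') :
    ∫ t in 0..T, u t * deriv (deriv f) t = ∫ t in 0..T, u'' t * f t := by
  obtain ⟨hsmooth, hf0, hfT, hdf0, hdfT⟩ := hf
  have huIcc : uIcc 0 T = Icc 0 T := uIcc_of_le hT.le
  set f' := derivWithin f (Icc 0 T)
  set f'' := derivWithin f' (Icc 0 T)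
  have hsmooth' : ContDiffOn ℝ ∞ f' (Icc 0 T) :=
    hsmooth.derivWithin (uniqueDiffOn_Icc hT) (by simp)
  have hsmooth'' : ContDiffOn ℝ ∞ f'' (Icc 0 T) :=
    hsmooth'.derivWithin (uniqueDiffOn_Icc hT) (by simp)
  have hf' : ∀ t ∈ uIcc 0 T, HasDerivWithinAt f (f' t) (uIcc 0 T) t := fun t ht => by
    rw [huIcc] at ht ⊢
    exact (hsmooth.differentiableOn (by simp) t ht).hasDerivWithinAt
  have hf'' : ∀ t ∈ uIcc 0 T, HasDerivWithinAt f' (f'' t) (uIcc 0 T) t := fun t ht => by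
    rw [huIcc] at ht ⊢
    exact (hsmooth'.differentiableOn (by simp) t ht).hasDerivWithinAt
  have hu'_cont : Continuous u' := continuous_iff_continuousAt.2 fun t => (hu' t).continuousAt
  calc ∫ t in 0..T, u t * deriv (deriv f) t
      = ∫ t in 0..T, u t * f'' t :=
        intervalIntegral.integral_congr_Ioo_of_le hT.le fun t ht => by
          simp only [deriv_deriv_eq_derivWithin_derivWithin (Icc_mem_nhds ht.1 ht.2), f'', f']
    _ = -∫ t in 0..T, u' t * f' t := by
        rw [intervalIntegral.integral_mul_deriv_eq_deriv_mul_of_hasDerivWithinAt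
          (fun t _ => (hu t).hasDerivWithinAt) hf'' (hu'_cont.intervalIntegrable 0 T)
          (hsmooth''.continuousOn.intervalIntegrable_of_Icc hT.le), hdf0, hdfT]
        ring
    _ = ∫ t in 0..T, u'' t * f t := by
        rw [intervalIntegral.integral_mul_deriv_eq_deriv_mul_of_hasDerivWithinAt
          (fun t _ => (hu' t).hasDerivWithinAt) hf' (hu''.intervalIntegrable 0 T)
          (hsmooth'.continuousOn.intervalIntegrable_of_Icc hT.le), hf0, hfT]
        ring

end Controls

section StateCoefficients

/-- The value at time `T` of the solution of `a'' + lam * a = f`, `a 0 = a' 0 = 0`, given by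
Duhamel's formula. For an eigenvalue `lam = lam k` of the Jacobi matrix, dividing it by `ρ k` gives
the coordinate along `φ k` of the state reached from rest under the control `f`. -/
noncomputable def stateCoeff (T lam : ℝ) (f : ℝ → ℝ) : ℝ :=
  ∫ s in 0..T, S (T - s) lam * f s

variable {T : ℝ} {f : ℝ → ℝ}

lemma stateCoeff_const_mul (T lam c : ℝ) (f : ℝ → ℝ) :
    stateCoeff T lam (fun t => c * f t) = c * stateCoeff T lam f := by
  simp only [stateCoeff, mul_left_comm _ c, intervalIntegral.integral_const_mul]

lemma stateCoeff_deriv_deriv (hT : 0 < T) (hf : f ∈ controls T) (lam : ℝ) :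
    stateCoeff T lam (deriv (deriv f)) = -lam * stateCoeff T lam f := by
  have hS : ∀ t, HasDerivAt (fun t => S (T - t) lam) (-dS (T - t) lam) t := fun t =>
    (hasDerivAt_S lam (T - t)).comp_const_sub T t
  have hdS : ∀ t, HasDerivAt (fun t => -dS (T - t) lam) (-lam * S (T - t) lam) t := fun t =>
    ((hasDerivAt_dS lam (T - t)).comp_const_sub T t).fun_neg.congr_deriv (neg_neg _)
  rw [stateCoeff, integral_mul_deriv_deriv_of_mem_controls hT hf hS hdS
    (continuous_const.mul (continuous_S_sub T lam))]
  simp only [stateCoeff, mul_assoc, intervalIntegral.integral_const_mul]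

lemma stateCoeff_deriv_deriv_add_const_mul (hT : 0 < T) (hf : ContDiff ℝ ∞ f)
    (hsupp : tsupport f ⊆ Ioo 0 T) (ν lam : ℝ) :
    stateCoeff T lam (fun t => deriv (deriv f) t + ν * f t) = (ν - lam) * stateCoeff T lam f := by
  have hS := continuous_S_sub T lam
  have hf'' : Continuous (deriv (deriv f)) := (hf.iterate_deriv 2).continuous
  have hadd : stateCoeff T lam (fun t => deriv (deriv f) t + ν * f t) =
      stateCoeff T lam (deriv (deriv f)) + stateCoeff T lam (fun t => ν * f t) := by
    simp only [stateCoeff, mul_add]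
    exact intervalIntegral.integral_add ((hS.mul hf'').intervalIntegrable 0 T)
      ((hS.mul (continuous_const.mul hf.continuous)).intervalIntegrable 0 T)
  rw [hadd, stateCoeff_const_mul,
    stateCoeff_deriv_deriv hT (mem_controls_of_tsupport_subset hT hf hsupp)]
  ring

lemma exists_stateCoeff_ne_zero (hT : 0 < T) (lam : ℝ) :
    ∃ f : ℝ → ℝ, ContDiff ℝ ∞ f ∧ tsupport f ⊆ Ioo 0 T ∧ stateCoeff T lam f ≠ 0 := by
  obtain ⟨s, hs, hSs⟩ := exists_S_ne_zero hT lam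
  have hmem : T - s ∈ Ioo 0 T := ⟨sub_pos.2 hs.2, sub_lt_self T hs.1⟩
  obtain ⟨χ, hχ_supp, -, hχ_smooth, hχ_range, hχ_one⟩ :=
    exists_contDiff_tsupport_subset (n := ⊤) (Ioo_mem_nhds hmem.1 hmem.2)
  have hS := continuous_S_sub T lam
  have hS_smooth : ContDiff ℝ ∞ fun t => S (T - t) lam :=
    (contDiff_S lam).comp (contDiff_const.sub contDiff_id)
  refine ⟨fun t => χ t * S (T - t) lam, hχ_smooth.mul hS_smooth,
    tsupport_mul_subset_left.trans hχ_supp, ?_⟩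
  have hsq : ∀ t, S (T - t) lam * (χ t * S (T - t) lam) = χ t * S (T - t) lam ^ 2 := fun t => by
    ring
  simp only [stateCoeff, hsq]
  refine (intervalIntegral.integral_pos hT (hχ_smooth.continuous.mul (hS.pow 2)).continuousOn
    (fun t _ => mul_nonneg (hχ_range (mem_range_self t)).1 (sq_nonneg _))
    ⟨T - s, Ioo_subset_Icc_self hmem, ?_⟩).ne'
  simp only [Pi.mul_apply, Pi.pow_apply, hχ_one, sub_sub_cancel, one_mul]
  positivity

lemma exists_stateCoeff_ne_zero_forall_eq_zero (hT : 0 < T) {lam : ℝ} {s : Finset ℝ}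
    (hlam : lam ∉ s) :
    ∃ f : ℝ → ℝ, ContDiff ℝ ∞ f ∧ tsupport f ⊆ Ioo 0 T ∧ stateCoeff T lam f ≠ 0 ∧
      ∀ μ ∈ s, stateCoeff T μ f = 0 := by
  induction s using Finset.induction_on with
  | empty => simpa using exists_stateCoeff_ne_zero hT lam
  | insert ν s _ ih =>
    rw [Finset.mem_insert, not_or] at hlam
    obtain ⟨f, hf, hsupp, hne, hzero⟩ := ih hlam.2
    have hcoeff := stateCoeff_deriv_deriv_add_const_mul hT hf hsupp ν
    refine ⟨fun t => deriv (deriv f) t + ν * f t, (hf.iterate_deriv 2).add (contDiff_const.mul hf),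
      Subset.trans (closure_minimal ?_ isClosed_closure) hsupp, ?_, ?_⟩
    · exact (Function.support_add _ _).trans <| union_subset
        (support_deriv_subset.trans tsupport_deriv_subset)
        ((Function.support_mul_subset_right _ _).trans (subset_tsupport f))
    · rw [hcoeff]
      exact mul_ne_zero (sub_ne_zero.2 (Ne.symm hlam.1)) hne
    · intro μ hμ
      rw [hcoeff]
      rcases Finset.mem_insert.1 hμ with rfl | hμ
      · rw [sub_self, zero_mul]
      · rw [hzero μ hμ, mul_zero]

end StateCoefficients

section ConnectingOperator

variable {N : ℕ} {lam ρ : Fin N → ℝ} {T : ℝ} {f : ℝ → ℝ}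

lemma integral_CTop_mul (lam ρ : Fin N → ℝ) (T : ℝ) (f : ℝ → ℝ) {g : ℝ → ℝ}
    (hg : IntervalIntegrable g volume 0 T) :
    ∫ t in 0..T, CTop lam ρ T f t * g t =
      ∑ k, 1 / ρ k * stateCoeff T (lam k) f * stateCoeff T (lam k) g := by
  have hexpand : ∀ t, CTop lam ρ T f t * g t =
      ∑ k, 1 / ρ k * stateCoeff T (lam k) f * (S (T - t) (lam k) * g t) := fun t => by
    rw [CTop, Finset.sum_mul]
    exact Finset.sum_congr rfl fun k _ => by rw [stateCoeff]; ring
  have hint : ∀ k, IntervalIntegrable (fun t => S (T - t) (lam k) * g t) volume 0 T := fun k =>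
    hg.continuousOn_mul (continuous_S_sub T (lam k)).continuousOn
  simp only [hexpand]
  rw [intervalIntegral.integral_finsetSum fun k _ => (hint k).const_mul _]
  simp only [intervalIntegral.integral_const_mul, stateCoeff]

lemma integral_CTop_mul_self (lam ρ : Fin N → ℝ) (hf : IntervalIntegrable f volume 0 T) :
    ∫ t in 0..T, CTop lam ρ T f t * f t = ∑ k, 1 / ρ k * stateCoeff T (lam k) f ^ 2 := by
  simp only [integral_CTop_mul lam ρ T f hf, mul_assoc, sq]

lemma integral_CTop_deriv_deriv_mul_self (lam ρ : Fin N → ℝ) (hT : 0 < T) (hf : f ∈ controls T) :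
    ∫ t in 0..T, CTop lam ρ T (deriv (deriv f)) t * f t =
      -∑ k, lam k / ρ k * stateCoeff T (lam k) f ^ 2 := by
  rw [integral_CTop_mul lam ρ T _ (intervalIntegrable_of_mem_controls hT.le hf),
    ← Finset.sum_neg_distrib]
  refine Finset.sum_congr rfl fun k _ => ?_
  rw [stateCoeff_deriv_deriv hT hf]
  ring

lemma neg_mul_integral_CTop_le {Λ : ℝ} (hΛ : ∀ k, lam k ≤ Λ) (hρ : ∀ k, 0 ≤ ρ k) (hT : 0 < T)
    (hf : f ∈ controls T) :
    -Λ * ∫ t in 0..T, CTop lam ρ T f t * f t ≤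
      ∫ t in 0..T, CTop lam ρ T (deriv (deriv f)) t * f t := by
  rw [integral_CTop_mul_self lam ρ (intervalIntegrable_of_mem_controls hT.le hf),
    integral_CTop_deriv_deriv_mul_self lam ρ hT hf, neg_mul, Finset.mul_sum, neg_le_neg_iff]
  refine Finset.sum_le_sum fun k _ => ?_
  rw [div_eq_mul_one_div, mul_assoc]
  exact mul_le_mul_of_nonneg_right (hΛ k)
    (mul_nonneg (one_div_nonneg.2 (hρ k)) (sq_nonneg _))

lemma integral_CTop_deriv_deriv_eq_neg_mul {Λ : ℝ} (hT : 0 < T) (hf : f ∈ controls T)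
    (hcoeff : ∀ k, lam k ≠ Λ → stateCoeff T (lam k) f = 0) :
    ∫ t in 0..T, CTop lam ρ T (deriv (deriv f)) t * f t =
      -Λ * ∫ t in 0..T, CTop lam ρ T f t * f t := by
  rw [integral_CTop_mul_self lam ρ (intervalIntegrable_of_mem_controls hT.le hf),
    integral_CTop_deriv_deriv_mul_self lam ρ hT hf, neg_mul, Finset.mul_sum]
  congr 1
  refine Finset.sum_congr rfl fun k _ => ?_
  rcases eq_or_ne (lam k) Λ with rfl | hne
  · ring
  · simp [hcoeff k hne]

lemma integral_CTop_pos (hρ : ∀ k, 0 < ρ k) (hf : IntervalIntegrable f volume 0 T) {n : Fin N}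
    (hn : stateCoeff T (lam n) f ≠ 0) : 0 < ∫ t in 0..T, CTop lam ρ T f t * f t := by
  rw [integral_CTop_mul_self lam ρ hf]
  refine Finset.sum_pos' (fun k _ => ?_) ⟨n, Finset.mem_univ n, ?_⟩
  · exact mul_nonneg (one_div_pos.2 (hρ k)).le (sq_nonneg _)
  · exact mul_pos (one_div_pos.2 (hρ n)) (by positivity)

lemma integral_CTop_const_mul (lam ρ : Fin N → ℝ) (hf : IntervalIntegrable f volume 0 T) (c : ℝ) :
    ∫ t in 0..T, CTop lam ρ T (fun s => c * f s) t * (c * f t) =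
      c ^ 2 * ∫ t in 0..T, CTop lam ρ T f t * f t := by
  rw [integral_CTop_mul_self lam ρ (hf.const_mul c), integral_CTop_mul_self lam ρ hf,
    Finset.mul_sum]
  refine Finset.sum_congr rfl fun k _ => ?_
  rw [stateCoeff_const_mul]
  ring

lemma exists_integral_CTop_eq_one (hρ : ∀ k, 0 < ρ k) (hT : 0 < T) (n : Fin N) :
    ∃ f ∈ controls T, (∫ t in 0..T, CTop lam ρ T f t * f t) = 1 ∧
      ∀ k, lam k ≠ lam n → stateCoeff T (lam k) f = 0 := by
  obtain ⟨f, hf_smooth, hsupp, hne, hzero⟩ := exists_stateCoeff_ne_zero_forall_eq_zero hT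
    (Finset.notMem_erase (lam n) (Finset.univ.image lam))
  have hf : f ∈ controls T := mem_controls_of_tsupport_subset hT hf_smooth hsupp
  have hint : IntervalIntegrable f volume 0 T := intervalIntegrable_of_mem_controls hT.le hf
  set q := ∫ t in 0..T, CTop lam ρ T f t * f t with hq
  have hq_pos : 0 < q := integral_CTop_pos hρ hint hne
  refine ⟨fun t => (√q)⁻¹ * f t, const_mul_mem_controls _ hf, ?_, fun k hk => ?_⟩
  · rw [integral_CTop_const_mul lam ρ hint, ← hq, inv_pow, Real.sq_sqrt hq_pos.le,
      inv_mul_cancel₀ hq_pos.ne']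
  · rw [stateCoeff_const_mul, hzero _ (Finset.mem_erase.2 ⟨hk, by simp⟩), mul_zero]

end ConnectingOperator

theorem stmt13_general {N : ℕ} {lam ρ : Fin N → ℝ} (hρ : ∀ k, 0 < ρ k) {T : ℝ} (hT : 0 < T)
    {n : Fin N} (hn : ∀ k, lam k ≤ lam n) :
    IsLeast {x : ℝ | ∃ f ∈ controls T, (∫ t in 0..T, CTop lam ρ T f t * f t) = 1 ∧
      x = ∫ t in 0..T, CTop lam ρ T (deriv (deriv f)) t * f t} (-lam n) := by
  constructor
  · obtain ⟨f, hf, hone, hcoeff⟩ := exists_integral_CTop_eq_one hρ hT n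
    exact ⟨f, hf, hone, by rw [integral_CTop_deriv_deriv_eq_neg_mul hT hf hcoeff, hone, mul_one]⟩
  · rintro x ⟨f, hf, hone, rfl⟩
    simpa only [hone, mul_one] using neg_mul_integral_CTop_le hn (fun k => (hρ k).le) hT hf

/-- the variational principle. Over controls
`f ∈ F₀ᵀ = {f ∈ C^∞([0,T]) : f(0) = f(T) = f'(0) = f'(T) = 0}` normalized by
`⟨Cᵀf, f⟩ = 1`, the infimum of `⟨Cᵀf'', f⟩` equals `-λ_N`, the smallest eigenvalue
of `-A` (where `λ_N` is the largest eigenvalue of `A`). -/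
theorem stmt13 {N : ℕ} (hN : 0 < N) (A : Matrix (Fin N) (Fin N) ℝ) (hA : IsJacobi A)
    (lam : Fin N → ℝ) (φ : Fin N → Fin N → ℝ) (ρ : Fin N → ℝ)
    (hlam : StrictMono lam)
    (heig : ∀ k, A.mulVec (φ k) = lam k • φ k)
    (hφ1 : ∀ k, φ k ⟨0, hN⟩ = 1)
    (hρ : ∀ k, ρ k = ∑ i, φ k i * φ k i)
    (T : ℝ) (hT : 0 < T) :
    sInf {x : ℝ | ∃ f : ℝ → ℝ,
      ContDiffOn ℝ (⊤ : ℕ∞) f (Set.Icc 0 T) ∧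
      f 0 = 0 ∧ f T = 0 ∧
      derivWithin f (Set.Icc 0 T) 0 = 0 ∧ derivWithin f (Set.Icc 0 T) T = 0 ∧
      (∫ t in (0:ℝ)..T, CTop lam ρ T f t * f t) = 1 ∧
      x = ∫ t in (0:ℝ)..T, CTop lam ρ T (deriv (deriv f)) t * f t} =
    -lam ⟨N - 1, by omega⟩ := by
  have hρ_pos : ∀ k, 0 < ρ k := fun k => hρ k ▸ sum_mul_self_pos (hφ1 k ▸ one_ne_zero)
  have hlast : ∀ k, lam k ≤ lam ⟨N - 1, by omega⟩ := fun k =>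
    hlam.monotone (Fin.le_def.2 (Nat.le_sub_one_of_lt k.2))
  simpa only [controls, mem_ofPred_eq, and_assoc] using (stmt13_general hρ_pos hT hlast).csInf_eq
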